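/- arXiv:2203.16623 — 2 statements merged into one kernel-verified Lean document; each statement's English description precedes it below -/
import Mathlib

section
/- Under the push-subgradient algorithm, if the graph sequence {𝔾(t)} is uniformly strongly connected, the subgradients are uniformly bounded (‖g_i(t)‖₂ ≤ G for all i, t), and the stepsizes satisfy the step-size assumption, then lim_{t→∞} f( (Σ_{τ=0}^t α(τ) z̄(τ)) / (Σ_{τ=0}^t α(τ)) ) = f(z*). -/
open Filter Finset
open scoped InnerProductSpace

def Phi {n : ℕ} (W : ℕ → Matrix (Fin n) (Fin n) ℝ) (t : ℕ) : ℕ → Matrix (Fin n) (Fin n) ℝ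
  | 0 => 1
  | k + 1 => W (t + k) * Phi W t k

lemma Phi_nonneg {n : ℕ} {W : ℕ → Matrix (Fin n) (Fin n) ℝ}
    (hW : ∀ t i j, 0 ≤ W t i j) (t k : ℕ) (i j : Fin n) : 0 ≤ Phi W t k i j := by
  induction k generalizing i with
  | zero => simp only [Phi, Matrix.one_apply]; split_ifs <;> norm_num
  | succ k ih =>
    simp only [Phi, Matrix.mul_apply]
    exact Finset.sum_nonneg fun l _ => mul_nonneg (hW _ _ _) (ih _)

lemma Phi_lb {n : ℕ} {W : ℕ → Matrix (Fin n) (Fin n) ℝ}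
    (hW : ∀ t i j, 0 ≤ W t i j) {β : ℝ} (hβ : 0 < β)
    (hWβ : ∀ t i j, 0 < W t i j → β ≤ W t i j) (t k : ℕ) (i j : Fin n)
    (h : 0 < Phi W t k i j) : β ^ k ≤ Phi W t k i j := by
  induction k generalizing i with
  | zero =>
    simp only [Phi, Matrix.one_apply] at h ⊢
    split_ifs at h ⊢ <;> simp_all
  | succ k ih =>
    simp only [Phi, Matrix.mul_apply] at h ⊢
    obtain ⟨l, -, hl⟩ := Finset.exists_lt_of_sum_lt (s := Finset.univ) (f := fun _ => (0:ℝ))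
      (by simpa using h)
    have h0 := Phi_nonneg hW t k l j
    have hw0 := hW (t + k) i l
    have h1 : 0 < Phi W t k l j := lt_of_le_of_ne h0 (by rintro h2; simp [← h2] at hl)
    have h2 : 0 < W (t + k) i l := lt_of_le_of_ne hw0 (by rintro h2; simp [← h2] at hl)
    calc β ^ (k+1) = β * β ^ k := by ring
      _ ≤ W (t + k) i l * Phi W t k l j :=
        mul_le_mul (hWβ _ _ _ h2) (ih _ h1) (by positivity) hw0
      _ ≤ _ := Finset.single_le_sum (f := fun l => W (t + k) i l * Phi W t k l j)
        (fun m _ => mul_nonneg (hW _ _ _) (Phi_nonneg hW _ _ _ _)) (Finset.mem_univ l)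

lemma Phi_step {n : ℕ} {W : ℕ → Matrix (Fin n) (Fin n) ℝ}
    (hW : ∀ t i j, 0 ≤ W t i j) (t k : ℕ) (i l j : Fin n)
    (h : 0 < Phi W t k l j) (hw : 0 < W (t + k) i l) : 0 < Phi W t (k+1) i j := by
  simp only [Phi, Matrix.mul_apply]
  exact Finset.sum_pos' (fun m _ => mul_nonneg (hW _ _ _) (Phi_nonneg hW _ _ _ _))
    ⟨l, Finset.mem_univ l, mul_pos hw h⟩

lemma Phi_mono {n : ℕ} {W : ℕ → Matrix (Fin n) (Fin n) ℝ}
    (hW : ∀ t i j, 0 ≤ W t i j) (hd : ∀ t i, 0 < W t i i) (t k m : ℕ) (hkm : k ≤ m) (i j : Fin n)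
    (h : 0 < Phi W t k i j) : 0 < Phi W t m i j := by
  induction m, hkm using Nat.le_induction with
  | base => exact h
  | succ m _ ih => exact Phi_step hW t m i i j ih (hd _ _)

lemma transGen_exit {V : Type*} {r : V → V → Prop} {S : V → Prop} {a b : V}
    (h : Relation.TransGen r a b) (ha : S a) (hb : ¬ S b) : ∃ u v, S u ∧ ¬ S v ∧ r u v := by
  induction h with
  | single h => exact ⟨_, _, ha, hb, h⟩
  | @tail b c h1 h2 ih =>
    by_cases hS : S b
    · exact ⟨_, _, hS, hb, h2⟩
    · exact ih hS

lemma Phi_pos {n : ℕ} {W : ℕ → Matrix (Fin n) (Fin n) ℝ}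
    (hW : ∀ t i j, 0 ≤ W t i j) (hd : ∀ t i, 0 < W t i i) (L : ℕ)
    (hUSC : ∀ t : ℕ, ∀ i j : Fin n,
      Relation.TransGen (fun u v : Fin n => ∃ k ∈ Finset.Ico t (t + L), 0 < W k v u) i j)
    (t : ℕ) (i j : Fin n) : 0 < Phi W t (n * L) i j := by
  classical
  have key : ∀ m : ℕ, (∀ i, 0 < Phi W t (m * L) i j) ∨
      m < (Finset.univ.filter fun i => 0 < Phi W t (m * L) i j).card := by
    intro m
    induction m with
    | zero =>
      right
      rw [Finset.card_pos]
      exact ⟨j, by simp [Phi]⟩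
    | succ m ih =>
      by_cases hall : ∀ i, 0 < Phi W t (m * L) i j
      · left
        intro i
        exact Phi_mono hW hd t _ _ (Nat.mul_le_mul_right L (Nat.le_succ m)) i j (hall i)
      · right
        have ih := ih.resolve_left hall
        push Not at hall
        obtain ⟨b, hb⟩ := hall
        have hj : 0 < Phi W t (m * L) j j :=
          Phi_mono hW hd t 0 _ (Nat.zero_le _) j j (by simp [Phi])
        obtain ⟨u, v, hu, hv, k, hk, hkw⟩ := transGen_exit
          (S := fun i => 0 < Phi W t (m * L) i j) (hUSC (t + m * L) j b) hj (not_lt.2 hb)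
        rw [Finset.mem_Ico] at hk
        obtain ⟨q, rfl⟩ : ∃ q, k = t + q := ⟨k - t, by omega⟩
        have hv2 : 0 < Phi W t ((m+1) * L) v j := by
          refine Phi_mono hW hd t (q+1) _ ?_ v j (Phi_step hW t q v u j
            (Phi_mono hW hd t (m * L) q (by omega) u j hu) hkw)
          rw [Nat.succ_mul]; omega
        refine lt_of_le_of_lt (Nat.succ_le_of_lt ih) (Finset.card_lt_card ?_)
        refine ⟨fun w hw => ?_, fun hsub => ?_⟩
        · simp only [Finset.mem_filter, Finset.mem_univ, true_and] at hw ⊢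
          exact Phi_mono hW hd t _ _ (Nat.mul_le_mul_right L (Nat.le_succ m)) w j hw
        · have := hsub (by simpa using hv2 : v ∈ _)
          simp only [Finset.mem_filter, Finset.mem_univ, true_and] at this
          exact hv this
  rcases key n with h | h
  · exact h i
  · have := Finset.card_le_univ (Finset.univ.filter fun i => 0 < Phi W t (n * L) i j)
    simp at this
    omega

lemma seq_summable {u a : ℕ → ℝ} {ρ : ℝ} (hρ : ρ < 1) {T : ℕ} (hu : ∀ t, 0 ≤ u t)
    (ha0 : ∀ t, 0 ≤ a t) (ha : Summable a) (h : ∀ t, u (t + T) ≤ ρ * u t + a t) :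
    Summable u := by
  refine summable_of_sum_range_le (c := ((∑ t ∈ range T, u t) + ∑' t, a t) / (1 - ρ)) hu ?_
  intro N
  rw [le_div_iff₀ (by linarith)]
  have h1 : ∑ t ∈ range N, u t ≤ ∑ t ∈ range (T + N), u t :=
    Finset.sum_le_sum_of_subset_of_nonneg (by simp) (fun _ _ _ => hu _)
  rw [Finset.sum_range_add] at h1
  have h2 : ∑ t ∈ range N, u (T + t) ≤ ρ * ∑ t ∈ range N, u t + ∑ t ∈ range N, a t := by
    rw [Finset.mul_sum, ← Finset.sum_add_distrib]
    exact Finset.sum_le_sum fun t _ => by rw [add_comm T t]; exact h t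
  have h3 : ∑ t ∈ range N, a t ≤ ∑' t, a t := ha.sum_le_tsum _ (fun _ _ => ha0 _)
  linarith

lemma seq_bdd {D : ℕ → ℝ} {ρ A : ℝ} (hρ0 : 0 ≤ ρ) (hρ : ρ < 1) {T : ℕ} (hT : 0 < T)
    (hD : ∀ t, 0 ≤ D t) (hA : 0 ≤ A) (h : ∀ t, D (t + T) ≤ ρ * D t + A) :
    ∃ M, 0 ≤ M ∧ ∀ t, D t ≤ M := by
  have hB : 0 ≤ A / (1 - ρ) := div_nonneg hA (by linarith)
  have hS : 0 ≤ ∑ t ∈ range T, D t := Finset.sum_nonneg fun _ _ => hD _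
  refine ⟨(∑ t ∈ range T, D t) + A / (1 - ρ), by linarith, ?_⟩
  intro t
  induction t using Nat.strong_induction_on with
  | _ t ih =>
    by_cases ht : t < T
    · have := Finset.single_le_sum (f := D) (fun i _ => hD i) (Finset.mem_range.2 ht)
      linarith
    · obtain ⟨s, rfl⟩ : ∃ s, t = s + T := ⟨t - T, by omega⟩
      have h1 := h s
      have h2 := mul_le_mul_of_nonneg_left (ih s (by omega)) hρ0
      have h3 : A = (1 - ρ) * (A / (1 - ρ)) := by
        field_simp [(by linarith : (1 - ρ) ≠ 0)]
      have h4 : ρ * ∑ t ∈ range T, D t ≤ ∑ t ∈ range T, D t := by nlinarith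
      nlinarith

lemma contraction {n : ℕ} {V : Type*} [NormedAddCommGroup V] [NormedSpace ℝ V]
    (a b : Fin n → ℝ) (z : Fin n → V) (D η : ℝ) (hη : 0 ≤ η) (j0 : Fin n)
    (ha : ∀ i, 0 ≤ a i) (hb : ∀ i, 0 ≤ b i)
    (ha1 : ∑ i, a i = 1) (hb1 : ∑ i, b i = 1) (haj : η ≤ a j0) (hbj : η ≤ b j0)
    (hD0 : 0 ≤ D) (hD : ∀ i j, ‖z i - z j‖ ≤ D) :
    ‖∑ i, a i • z i - ∑ i, b i • z i‖ ≤ (1 - η ^ 2) * D := by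
  have e : ∑ i, a i • z i - ∑ i, b i • z i = ∑ i, ∑ j, (a i * b j) • (z i - z j) := by
    simp only [smul_sub, Finset.sum_sub_distrib]
    congr 1
    · refine Finset.sum_congr rfl fun i _ => ?_
      rw [← Finset.sum_smul, ← Finset.mul_sum, hb1, mul_one]
    · rw [Finset.sum_comm]
      refine Finset.sum_congr rfl fun i _ => ?_
      rw [← Finset.sum_smul, ← Finset.sum_mul, ha1, one_mul]
  rw [e]
  have h1 : ‖∑ i, ∑ j, (a i * b j) • (z i - z j)‖ ≤
      ∑ i, ∑ j, (a i * b j) * (if i = j then 0 else D) := by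
    refine (norm_sum_le _ _).trans (Finset.sum_le_sum fun i _ => ?_)
    refine (norm_sum_le _ _).trans (Finset.sum_le_sum fun j _ => ?_)
    rw [norm_smul, Real.norm_of_nonneg (mul_nonneg (ha i) (hb j))]
    refine mul_le_mul_of_nonneg_left ?_ (mul_nonneg (ha i) (hb j))
    split_ifs with h
    · simp [h]
    · exact hD i j
  have h2 : ∑ i, ∑ j, (a i * b j) * (if i = j then 0 else D) = D - (∑ i, a i * b i) * D := by
    have : ∀ i j, (a i * b j) * (if i = j then 0 else D) =
        a i * b j * D - if i = j then a i * b j * D else 0 := by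
      intro i j; split_ifs <;> simp
    simp only [this, Finset.sum_sub_distrib, Finset.sum_ite_eq, Finset.mem_univ, if_true]
    congr 1
    · simp only [mul_assoc, ← Finset.mul_sum, ← Finset.sum_mul, ha1, hb1, one_mul]
    · rw [Finset.sum_mul]
  have h3 : η ^ 2 ≤ ∑ i, a i * b i := by
    have := Finset.single_le_sum (f := fun i => a i * b i)
      (fun i _ => mul_nonneg (ha i) (hb i)) (Finset.mem_univ j0)
    have h4 := mul_le_mul haj hbj hη (ha j0)
    nlinarith
  nlinarith [mul_le_mul_of_nonneg_right h3 hD0]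

lemma lip_ball {n : ℕ} {V : Type*} [NormedAddCommGroup V] [InnerProductSpace ℝ V]
    [FiniteDimensional ℝ V] (f : Fin n → V → ℝ) (hconv : ∀ i, ConvexOn ℝ Set.univ (f i))
    (c : V) (R : ℝ) : ∃ K, 0 ≤ K ∧ ∀ j u v, ‖u - c‖ ≤ R → ‖v - c‖ ≤ R →
      f j u - f j v ≤ K * ‖u - v‖ := by
  have h1 : ∀ j, ∃ K : NNReal, LipschitzOnWith K (f j) (Metric.closedBall c R) := by
    intro j
    have hl : LocallyLipschitz (f j) := (hconv j).locallyLipschitz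
    have : ProperSpace V := FiniteDimensional.proper_real V
    exact LocallyLipschitzOn.exists_lipschitzOnWith_of_compact (isCompact_closedBall c R)
      hl.locallyLipschitzOn
  choose K hK using h1
  refine ⟨∑ j, (K j : ℝ), by positivity, ?_⟩
  intro j u v hu hv
  have := (hK j).dist_le_mul u (by simpa [dist_eq_norm] using hu) v (by simpa [dist_eq_norm] using hv)
  rw [dist_eq_norm, dist_eq_norm] at this
  have h3 : (K j : ℝ) ≤ ∑ j, (K j : ℝ) :=
    Finset.single_le_sum (f := fun j => (K j : ℝ)) (fun i _ => (K i).2) (Finset.mem_univ j)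
  have h4 := (le_abs_self _).trans this
  exact h4.trans (mul_le_mul_of_nonneg_right h3 (norm_nonneg _))

lemma y_prop {n : ℕ} {W : ℕ → Matrix (Fin n) (Fin n) ℝ} {y : ℕ → Fin n → ℝ}
    (hyrec : ∀ t i, y (t + 1) i = ∑ j, W t i j * y t j) (t k : ℕ) (i : Fin n) :
    y (t + k) i = ∑ j, Phi W t k i j * y t j := by
  induction k generalizing i with
  | zero => simp [Phi, Matrix.one_apply]
  | succ k ih =>
    rw [← add_assoc, hyrec]
    simp only [Phi, Matrix.mul_apply, ih, Finset.mul_sum, Finset.sum_mul]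
    rw [Finset.sum_comm]
    simp only [mul_assoc]

lemma x_prop {n : ℕ} {V : Type*} [NormedAddCommGroup V] [NormedSpace ℝ V]
    {W : ℕ → Matrix (Fin n) (Fin n) ℝ} (hW : ∀ t i j, 0 ≤ W t i j)
    (hWcol : ∀ t j, ∑ i, W t i j = 1) {x g : ℕ → Fin n → V} {α : ℕ → ℝ}
    (hαpos : ∀ t, 0 < α t) (hα : Antitone α)
    (hxrec : ∀ t i, x (t + 1) i = ∑ j, W t i j • (x t j - α t • g t j))
    {G : ℝ} (hG : ∀ t i, ‖g t i‖ ≤ G) (t k : ℕ) :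
    ∑ i, ‖x (t + k) i - ∑ j, Phi W t k i j • x t j‖ ≤ k * (n * (α t * G)) := by
  induction k with
  | zero => simp [Phi, Matrix.one_apply]
  | succ k ih =>
    have e : ∀ i, x (t + (k+1)) i - ∑ j, Phi W t (k+1) i j • x t j =
        ∑ l, W (t + k) i l • ((x (t + k) l - ∑ j, Phi W t k l j • x t j)
          - α (t + k) • g (t + k) l) := by
      intro i
      rw [← add_assoc, hxrec]
      simp only [Phi, Matrix.mul_apply, smul_sub, Finset.sum_sub_distrib, Finset.smul_sum,
        Finset.sum_smul, mul_smul]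
      rw [Finset.sum_comm (f := fun j l => W (t + k) i l • Phi W t k l j • x t j)]
      abel
    have h1 : ∀ i, ‖x (t + (k+1)) i - ∑ j, Phi W t (k+1) i j • x t j‖ ≤
        ∑ l, W (t + k) i l * (‖x (t + k) l - ∑ j, Phi W t k l j • x t j‖ + α t * G) := by
      intro i
      rw [e]
      refine (norm_sum_le _ _).trans (Finset.sum_le_sum fun l _ => ?_)
      rw [norm_smul, Real.norm_of_nonneg (hW _ _ _)]
      refine mul_le_mul_of_nonneg_left ((norm_sub_le _ _).trans ?_) (hW _ _ _)
      rw [norm_smul, Real.norm_of_nonneg (hαpos _).le]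
      have := mul_le_mul (hα (Nat.le_add_right t k)) (hG (t + k) l) (norm_nonneg _) (hαpos t).le
      linarith
    refine (Finset.sum_le_sum fun i _ => h1 i).trans ?_
    rw [Finset.sum_comm]
    simp only [← Finset.sum_mul, hWcol, one_mul, Finset.sum_add_distrib, Finset.sum_const,
      Finset.card_univ, Fintype.card_fin, nsmul_eq_mul]
    push_cast
    linarith

lemma consensus {n : ℕ} (hn : 0 < n) {V : Type*} [NormedAddCommGroup V] [NormedSpace ℝ V]
    {W : ℕ → Matrix (Fin n) (Fin n) ℝ} (hW : ∀ t i j, 0 ≤ W t i j)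
    (hWcol : ∀ t j, ∑ i, W t i j = 1) (hd : ∀ t i, 0 < W t i i)
    {β : ℝ} (hβ : 0 < β) (hWβ : ∀ t i j, 0 < W t i j → β ≤ W t i j)
    (L : ℕ) (hL : 0 < L)
    (hUSC : ∀ t : ℕ, ∀ i j : Fin n,
      Relation.TransGen (fun u v : Fin n => ∃ k ∈ Finset.Ico t (t + L), 0 < W k v u) i j)
    {x g z : ℕ → Fin n → V} {y : ℕ → Fin n → ℝ} (hy0 : ∀ i, y 0 i = 1)
    (hyrec : ∀ t i, y (t + 1) i = ∑ j, W t i j * y t j)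
    {α : ℕ → ℝ} (hαpos : ∀ t, 0 < α t) (hα : Antitone α)
    (hαsq : Summable fun t => α t ^ 2)
    (hxrec : ∀ t i, x (t + 1) i = ∑ j, W t i j • (x t j - α t • g t j))
    (hz : ∀ t i, z t i = (y t i)⁻¹ • x t i)
    {G : ℝ} (hG : ∀ t i, ‖g t i‖ ≤ G) :
    (∀ t i, 0 < y t i) ∧ (∀ t, ∑ i, y t i = n) ∧
    ∃ D : ℕ → ℝ, (∀ t, 0 ≤ D t) ∧ (∀ t i j, ‖z t i - z t j‖ ≤ D t) ∧
      (Summable fun t => α t * D t) ∧ ∃ M, 0 ≤ M ∧ ∀ t, D t ≤ M := by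
  have hG0 : 0 ≤ G := (norm_nonneg _).trans (hG 0 ⟨0, hn⟩)
  have hn' : (0:ℝ) < n := by exact_mod_cast hn
  have hn1 : (1:ℝ) ≤ n := by exact_mod_cast hn
  have hysum : ∀ t, ∑ i, y t i = n := by
    intro t
    induction t with
    | zero => simp [hy0]
    | succ t ih =>
      simp only [hyrec]
      rw [Finset.sum_comm]
      simp only [← Finset.sum_mul, hWcol, one_mul, ih]
  have hy00 : ∀ t i, 0 ≤ y t i := by
    intro t
    induction t with
    | zero => simp [hy0]
    | succ t ih =>
      intro i
      rw [hyrec]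
      exact Finset.sum_nonneg fun j _ => mul_nonneg (hW _ _ _) (ih j)
  have hyn : ∀ t i, y t i ≤ n := fun t i => by
    rw [← hysum t]
    exact Finset.single_le_sum (f := y t) (fun i _ => hy00 t i) (Finset.mem_univ i)
  have hβ1 : β ≤ 1 := by
    refine (hWβ 0 ⟨0, hn⟩ ⟨0, hn⟩ (hd _ _)).trans ?_
    rw [← hWcol 0 ⟨0, hn⟩]
    exact Finset.single_le_sum (f := fun i => W 0 i ⟨0, hn⟩) (fun i _ => hW _ _ _)
      (Finset.mem_univ _)
  set T := n * L with hTdef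
  have hT : 0 < T := Nat.mul_pos hn hL
  set c := β ^ T with hc
  have hc0 : 0 < c := pow_pos hβ T
  have hc1 : c ≤ 1 := pow_le_one₀ hβ.le hβ1
  have hΦ : ∀ t i j, c ≤ Phi W t T i j := fun t i j =>
    Phi_lb hW hβ hWβ t T i j (Phi_pos hW hd L hUSC t i j)
  have hyc : ∀ t i, c ≤ y t i := by
    intro t i
    by_cases ht : T ≤ t
    · obtain ⟨s, rfl⟩ : ∃ s, t = s + T := ⟨t - T, by omega⟩
      rw [y_prop hyrec]
      calc c ≤ c * n := by nlinarith
        _ = ∑ j, c * y s j := by rw [← Finset.mul_sum, hysum]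
        _ ≤ _ := Finset.sum_le_sum fun j _ => mul_le_mul_of_nonneg_right (hΦ s i j) (hy00 _ _)
    · have h1 := y_prop hyrec 0 t i
      rw [zero_add] at h1
      rw [h1]
      simp only [hy0, mul_one]
      have h2 : β ^ t ≤ Phi W 0 t i i := Phi_lb hW hβ hWβ 0 t i i
        (Phi_mono hW hd 0 0 t (Nat.zero_le _) i i (by simp [Phi]))
      have h3 : c ≤ β ^ t := pow_le_pow_of_le_one hβ.le hβ1 (by omega)
      exact (h3.trans h2).trans (Finset.single_le_sum (f := fun j => Phi W 0 t i j)
        (fun j _ => Phi_nonneg hW _ _ _ _) (Finset.mem_univ i))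
  have hypos : ∀ t i, 0 < y t i := fun t i => hc0.trans_le (hyc t i)
  refine ⟨hypos, hysum, ?_⟩
  set η := c * c / n with hη
  have hη0 : 0 < η := by positivity
  have hη1 : η ≤ 1 := by
    rw [hη, div_le_one hn']
    nlinarith
  let D : ℕ → ℝ := fun t => ‖fun p : Fin n × Fin n => z t p.1 - z t p.2‖
  have hD0 : ∀ t, 0 ≤ D t := fun t => norm_nonneg _
  have hD : ∀ t i j, ‖z t i - z t j‖ ≤ D t := fun t i j =>
    norm_le_pi_norm (fun p : Fin n × Fin n => z t p.1 - z t p.2) (i, j)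
  set C := 2 * (T * (n * G) / c) with hC
  have hC0 : 0 ≤ C := by positivity
  have hrec : ∀ t, D (t + T) ≤ (1 - η ^ 2) * D t + C * α t := by
    intro t
    have hrhs : 0 ≤ (1 - η ^ 2) * D t + C * α t := by
      have : 0 ≤ 1 - η ^ 2 := by nlinarith
      have := mul_nonneg this (hD0 t)
      have := mul_nonneg hC0 (hαpos t).le
      linarith
    refine (pi_norm_le_iff_of_nonneg hrhs).2 ?_
    rintro ⟨i, k⟩
    simp only
    let Q : Fin n → Fin n → ℝ := fun i j => Phi W t T i j * y t j * (y (t + T) i)⁻¹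
    let r : Fin n → V := fun i => x (t + T) i - ∑ j, Phi W t T i j • x t j
    have hxz : ∀ j, x t j = y t j • z t j := fun j => by
      rw [hz, smul_smul, mul_inv_cancel₀ (hypos t j).ne', one_smul]
    have hzi : ∀ i, z (t + T) i = ∑ j, Q i j • z t j + (y (t + T) i)⁻¹ • r i := by
      intro i
      simp only [r, Q]
      rw [hz (t + T) i, smul_sub, Finset.smul_sum]
      have : ∀ j, (Phi W t T i j * y t j * (y (t + T) i)⁻¹) • z t j =
          (y (t + T) i)⁻¹ • Phi W t T i j • x t j := by
        intro j
        rw [hxz j, smul_smul, smul_smul]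
        congr 1
        ring
      simp only [this]
      abel
    have hQ0 : ∀ i j, 0 ≤ Q i j := fun i j =>
      mul_nonneg (mul_nonneg (Phi_nonneg hW _ _ _ _) (hy00 _ _)) (inv_nonneg.2 (hy00 _ _))
    have hQ1 : ∀ i, ∑ j, Q i j = 1 := by
      intro i
      simp only [Q]
      rw [← Finset.sum_mul, ← y_prop hyrec, mul_inv_cancel₀ (hypos _ i).ne']
    have hQη : ∀ i j, η ≤ Q i j := by
      intro i j
      simp only [Q, hη]
      rw [div_eq_mul_inv]
      refine mul_le_mul (mul_le_mul (hΦ _ _ _) (hyc _ _) hc0.le (Phi_nonneg hW _ _ _ _)) ?_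
        (by positivity) (mul_nonneg (Phi_nonneg hW _ _ _ _) (hy00 _ _))
      exact inv_anti₀ (hypos _ _) (hyn _ _)
    have hr : ∀ i, ‖(y (t + T) i)⁻¹ • r i‖ ≤ (T * (n * G) / c) * α t := by
      intro i
      rw [norm_smul, norm_inv, Real.norm_of_nonneg (hy00 _ _)]
      have h1 : ‖r i‖ ≤ T * (n * (α t * G)) :=
        (Finset.single_le_sum (f := fun i => ‖r i‖) (fun i _ => norm_nonneg _)
          (Finset.mem_univ i)).trans (x_prop hW hWcol hαpos hα hxrec hG t T)
      have h2 : (y (t + T) i)⁻¹ ≤ c⁻¹ := inv_anti₀ hc0 (hyc _ _)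
      calc _ ≤ c⁻¹ * (T * (n * (α t * G))) := mul_le_mul h2 h1 (norm_nonneg _) (by positivity)
        _ = _ := by rw [div_eq_mul_inv]; ring
    have hcon := contraction (Q i) (Q k) (z t) (D t) η hη0.le i (hQ0 i) (hQ0 k) (hQ1 i) (hQ1 k)
      (hQη i i) (hQη k i) (hD0 t) (hD t)
    rw [hzi i, hzi k, add_sub_add_comm]
    refine (norm_add_le _ _).trans ?_
    have h5 := norm_sub_le ((y (t + T) i)⁻¹ • r i) ((y (t + T) k)⁻¹ • r k)
    have h6 := hr i
    have h7 := hr k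
    rw [hC]
    linarith
  have hρ1 : 1 - η ^ 2 < 1 := by nlinarith
  have hρ0 : 0 ≤ 1 - η ^ 2 := by nlinarith
  refine ⟨D, hD0, hD, ?_, ?_⟩
  · refine seq_summable (a := fun t => C * α t ^ 2) hρ1 (T := T)
      (fun t => mul_nonneg (hαpos t).le (hD0 t)) (fun t => by positivity) (hαsq.mul_left C) ?_
    intro t
    have h1 := mul_le_mul_of_nonneg_right (hα (Nat.le_add_right t T)) (hD0 (t + T))
    have h2 := mul_le_mul_of_nonneg_left (hrec t) (hαpos t).le
    nlinarith
  · refine seq_bdd (A := C * α 0) hρ0 hρ1 hT hD0 (mul_nonneg hC0 (hαpos 0).le) ?_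
    intro t
    have := mul_le_mul_of_nonneg_left (hα (Nat.zero_le t)) hC0
    linarith [hrec t]

lemma h_lower {n : ℕ} {V : Type*} [NormedAddCommGroup V] [InnerProductSpace ℝ V]
    (f : Fin n → V → ℝ) (hconv : ∀ i, ConvexOn ℝ Set.univ (f i)) (zs : V)
    (hmin : ∀ w, ∑ j, f j zs ≤ ∑ j, f j w) (K : ℝ)
    (hK : ∀ j u v, ‖u - zs‖ ≤ 1 → ‖v - zs‖ ≤ 1 → f j u - f j v ≤ K * ‖u - v‖)
    (hK0 : 0 ≤ K) (z : Fin n → V) (xb : V) (D : ℝ) (hD : ∀ i, ‖z i - xb‖ ≤ D) (hD0 : 0 ≤ D) :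
    -(n * (K * D)) ≤ ∑ j, (f j (z j) - f j zs) := by
  set R := 1 + ‖xb - zs‖ + D with hR
  have hR1 : 1 ≤ R := by have := norm_nonneg (xb - zs); linarith
  have hR0 : 0 < R := by linarith
  have hs : R⁻¹ ≤ 1 := inv_le_one_of_one_le₀ hR1
  have hs0 : 0 < R⁻¹ := inv_pos.2 hR0
  set v := zs + R⁻¹ • (xb - zs) with hv
  have hball : ∀ u, ‖u - zs‖ ≤ R → ‖(zs + R⁻¹ • (u - zs)) - zs‖ ≤ 1 := by
    intro u hu
    rw [add_sub_cancel_left, norm_smul, norm_inv, Real.norm_of_nonneg hR0.le,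
      inv_mul_le_iff₀ hR0, mul_one]
    exact hu
  have h1 : ∀ j, R * (f j v - f j zs) - K * D ≤ f j (z j) - f j zs := by
    intro j
    set u := zs + R⁻¹ • (z j - zs) with hu
    have hc := (hconv j).2 (Set.mem_univ zs) (Set.mem_univ (z j))
      (by linarith : 0 ≤ 1 - R⁻¹) hs0.le (by ring)
    have he : (1 - R⁻¹) • zs + R⁻¹ • z j = u := by
      rw [hu, smul_sub, sub_smul, one_smul]; abel
    rw [he, smul_eq_mul, smul_eq_mul] at hc
    have hl := hK j v u (hball xb (by linarith)) (hball (z j) (by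
      have := norm_add_le (z j - xb) (xb - zs)
      rw [sub_add_sub_cancel] at this
      linarith [hD j]))
    have hvu : ‖v - u‖ ≤ R⁻¹ * D := by
      have : v - u = R⁻¹ • (xb - z j) := by
        rw [hv, hu, add_sub_add_left_eq_sub, ← smul_sub]; congr 1; abel
      rw [this, norm_smul, norm_inv, Real.norm_of_nonneg hR0.le, norm_sub_rev]
      exact mul_le_mul_of_nonneg_left (hD j) hs0.le
    have hl2 : f j v - f j u ≤ K * (R⁻¹ * D) := hl.trans (mul_le_mul_of_nonneg_left hvu hK0)
    have h3 : f j v - f j zs ≤ R⁻¹ * (f j (z j) - f j zs + K * D) := by linarith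
    have h4 := mul_le_mul_of_nonneg_left h3 hR0.le
    rw [← mul_assoc, mul_inv_cancel₀ hR0.ne', one_mul] at h4
    linarith
  have h2 := Finset.sum_le_sum (s := Finset.univ) fun j _ => h1 j
  rw [Finset.sum_sub_distrib, ← Finset.mul_sum, Finset.sum_sub_distrib] at h2
  simp only [Finset.sum_const, Finset.card_univ, Fintype.card_fin, nsmul_eq_mul] at h2
  have := mul_nonneg hR0.le (sub_nonneg.2 (hmin v))
  linarith

theorem stmt_0
    (n : ℕ) (hn : 0 < n)
    (W : ℕ → Matrix (Fin n) (Fin n) ℝ)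
    (hWnonneg : ∀ t i j, 0 ≤ W t i j)
    (hWcol : ∀ t j, ∑ i, W t i j = 1)
    (hWdiag : ∀ t i, 0 < W t i i)
    (β : ℝ) (hβ : 0 < β)
    (hWβ : ∀ t i j, 0 < W t i j → β ≤ W t i j)
    (L : ℕ) (hL : 0 < L)
    (hUSC : ∀ t : ℕ, ∀ i j : Fin n,
      Relation.TransGen (fun u v : Fin n => ∃ k ∈ Finset.Ico t (t + L), 0 < W k v u) i j)
    (d : ℕ)
    (x g : ℕ → Fin n → EuclideanSpace ℝ (Fin d))
    (y : ℕ → Fin n → ℝ)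
    (hy0 : ∀ i, y 0 i = 1)
    (hyrec : ∀ t i, y (t + 1) i = ∑ j, W t i j * y t j)
    (α : ℕ → ℝ) (hαpos : ∀ t, 0 < α t)
    (hxrec : ∀ t i, x (t + 1) i = ∑ j, W t i j • (x t j - α t • g t j))
    (z : ℕ → Fin n → EuclideanSpace ℝ (Fin d))
    (hz : ∀ t i, z t i = (y t i)⁻¹ • x t i)
    (G : ℝ) (hG : ∀ t i, ‖g t i‖ ≤ G)
    (f : Fin n → EuclideanSpace ℝ (Fin d) → ℝ)
    (hconv : ∀ i, ConvexOn ℝ Set.univ (f i))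
    (F : EuclideanSpace ℝ (Fin d) → ℝ)
    (hF : ∀ w, F w = (n : ℝ)⁻¹ * ∑ i, f i w)
    (zstar : EuclideanSpace ℝ (Fin d))
    (hmin : ∀ w, F zstar ≤ F w)
    (hsub : ∀ t j w, f j (z t j) + ⟪g t j, w - z t j⟫_ℝ ≤ f j w)
    (hαmono : ∀ t, α (t + 1) ≤ α t)
    (hαdiv : ¬ Summable α)
    (hαsq : Summable fun t => α t ^ 2)
    (zbar : ℕ → EuclideanSpace ℝ (Fin d))
    (hzbar : ∀ t, zbar t = (n : ℝ)⁻¹ • ∑ i, z t i)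
    :
    Tendsto (fun t =>
        F ((∑ τ ∈ Finset.range (t + 1), α τ)⁻¹ •
            ∑ τ ∈ Finset.range (t + 1), α τ • zbar τ))
      atTop (nhds (F zstar)) := by
  have hn' : (0:ℝ) < n := by exact_mod_cast hn
  have hG0 : 0 ≤ G := (norm_nonneg _).trans (hG 0 ⟨0, hn⟩)
  have hα : Antitone α := antitone_nat_of_succ_le hαmono
  obtain ⟨hypos, hysum, D, hD0, hD, hsum, M, hM0, hM⟩ := consensus hn hWnonneg hWcol hWdiag hβ hWβ
    L hL hUSC hy0 hyrec hαpos hα hαsq hxrec hz hG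
  -- weighted averages stay within D
  have havg : ∀ t (w : Fin n → ℝ), (∀ i, 0 ≤ w i) → ∑ i, w i = n → ∀ i,
      ‖z t i - (n:ℝ)⁻¹ • ∑ j, w j • z t j‖ ≤ D t := by
    intro t w hw hw1 i
    have e : z t i - (n:ℝ)⁻¹ • ∑ j, w j • z t j = (n:ℝ)⁻¹ • ∑ j, w j • (z t i - z t j) := by
      simp only [smul_sub, Finset.sum_sub_distrib, ← Finset.sum_smul, hw1]
      rw [smul_smul, inv_mul_cancel₀ hn'.ne', one_smul]
    rw [e, norm_smul, norm_inv, Real.norm_of_nonneg hn'.le, inv_mul_le_iff₀ hn', ← hw1,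
      Finset.sum_mul]
    refine (norm_sum_le _ _).trans (Finset.sum_le_sum fun j _ => ?_)
    rw [norm_smul, Real.norm_of_nonneg (hw j)]
    exact mul_le_mul_of_nonneg_left (hD t i j) (hw j)
  set xb : ℕ → EuclideanSpace ℝ (Fin d) := fun t => (n:ℝ)⁻¹ • ∑ i, x t i with hxb
  have hzx : ∀ t i, ‖z t i - xb t‖ ≤ D t := by
    intro t i
    have : xb t = (n:ℝ)⁻¹ • ∑ j, y t j • z t j := by
      simp only [hxb]
      congr 1
      refine Finset.sum_congr rfl fun j _ => ?_
      rw [hz, smul_smul, mul_inv_cancel₀ (hypos t j).ne', one_smul]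
    rw [this]
    exact havg t (y t) (fun i => (hypos t i).le) (hysum t) i
  have hzz : ∀ t i, ‖z t i - zbar t‖ ≤ D t := by
    intro t i
    have := havg t (fun _ => 1) (fun _ => zero_le_one) (by simp) i
    rw [hzbar]
    simpa using this
  set gb : ℕ → EuclideanSpace ℝ (Fin d) := fun t => (n:ℝ)⁻¹ • ∑ i, g t i with hgb
  have hxbrec : ∀ t, xb (t + 1) = xb t - α t • gb t := by
    intro t
    simp only [hxb, hgb, hxrec]
    rw [Finset.sum_comm]
    simp only [← Finset.sum_smul, hWcol, one_smul, Finset.sum_sub_distrib, ← Finset.smul_sum]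
    rw [smul_sub, smul_comm]
  have hgbn : ∀ t, ‖gb t‖ ≤ G := by
    intro t
    simp only [hgb]
    rw [norm_smul, norm_inv, Real.norm_of_nonneg hn'.le, inv_mul_le_iff₀ hn']
    refine (norm_sum_le _ _).trans ((Finset.sum_le_sum fun j _ => hG t j).trans ?_)
    simp
  set h : ℕ → ℝ := fun t => ∑ j, (f j (z t j) - f j zstar) with hh
  have hinner : ∀ t, (n:ℝ)⁻¹ * h t - G * D t ≤ ⟪gb t, xb t - zstar⟫_ℝ := by
    intro t
    have h1 : ∀ j, f j (z t j) - f j zstar - G * D t ≤ ⟪g t j, xb t - zstar⟫_ℝ := by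
      intro j
      have h2 := hsub t j zstar
      have h3 : ⟪g t j, xb t - zstar⟫_ℝ =
          -⟪g t j, zstar - z t j⟫_ℝ - ⟪g t j, z t j - xb t⟫_ℝ := by
        rw [← inner_neg_right, ← inner_sub_right]; congr 1; abel
      have h4 := real_inner_le_norm (g t j) (z t j - xb t)
      have h5 := mul_le_mul (hG t j) (hzx t j) (norm_nonneg _) hG0
      linarith
    simp only [hgb, real_inner_smul_left, sum_inner]
    have h2 := Finset.sum_le_sum (s := Finset.univ) fun j _ => h1 j
    rw [Finset.sum_sub_distrib] at h2
    simp only [Finset.sum_const, Finset.card_univ, Fintype.card_fin, nsmul_eq_mul] at h2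
    have h3 := mul_le_mul_of_nonneg_left h2 (inv_nonneg.2 hn'.le)
    refine le_trans (le_of_eq ?_) h3
    simp only [hh]
    field_simp
  set E : ℕ → ℝ := fun t => ‖xb t - zstar‖ ^ 2 with hE
  have hErec : ∀ t, E (t + 1) ≤ E t - 2 * (n:ℝ)⁻¹ * (α t * h t)
      + (2 * G * (α t * D t) + G ^ 2 * α t ^ 2) := by
    intro t
    have h1 : xb (t + 1) - zstar = (xb t - zstar) - α t • gb t := by rw [hxbrec]; abel
    simp only [hE]
    rw [h1, norm_sub_sq_real, real_inner_smul_right, real_inner_comm, norm_smul,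
      Real.norm_of_nonneg (hαpos t).le]
    have h2 := mul_le_mul_of_nonneg_left (hinner t) (hαpos t).le
    have h3 : (α t * ‖gb t‖) ^ 2 ≤ G ^ 2 * α t ^ 2 := by
      rw [← mul_pow, mul_comm G]
      exact pow_le_pow_left₀ (mul_nonneg (hαpos t).le (norm_nonneg _))
        (mul_le_mul_of_nonneg_left (hgbn t) (hαpos t).le) 2
    nlinarith
  have hS : ∀ (a b : ℝ), 0 ≤ a → 0 ≤ b → ∀ N,
      ∑ t ∈ range N, (a * (α t * D t) + b * α t ^ 2) ≤
        a * (∑' t, α t * D t) + b * ∑' t, α t ^ 2 := by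
    intro a b ha hb N
    rw [Finset.sum_add_distrib, ← Finset.mul_sum, ← Finset.mul_sum]
    have h1 := hsum.sum_le_tsum (range N) (fun t _ => mul_nonneg (hαpos t).le (hD0 t))
    have h2 := hαsq.sum_le_tsum (range N) (fun t _ => by positivity)
    exact add_le_add (mul_le_mul_of_nonneg_left h1 ha) (mul_le_mul_of_nonneg_left h2 hb)
  have hErecs : ∀ N, E N + 2 * (n:ℝ)⁻¹ * ∑ t ∈ range N, α t * h t ≤
      E 0 + ∑ t ∈ range N, (2 * G * (α t * D t) + G ^ 2 * α t ^ 2) := by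
    intro N
    induction N with
    | zero => simp
    | succ N ih =>
      rw [Finset.sum_range_succ, Finset.sum_range_succ]
      linarith [hErec N]
  have hminf : ∀ w, ∑ j, f j zstar ≤ ∑ j, f j w := by
    intro w
    have := hmin w
    rw [hF, hF] at this
    exact le_of_mul_le_mul_left this (inv_pos.2 hn')
  obtain ⟨K, hK0, hK⟩ := lip_ball f hconv zstar 1
  have hlow : ∀ t, -(n * (K * D t)) ≤ h t := fun t =>
    h_lower f hconv zstar hminf K hK hK0 (z t) (xb t) (D t) (hzx t) (hD0 t)
  set B := E 0 + ((2 * G) * (∑' t, α t * D t) + G ^ 2 * ∑' t, α t ^ 2) with hB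
  set P := B + 2 * K * ∑' t, α t * D t with hP
  have hEbd : ∀ N, E N ≤ P := by
    intro N
    have h1 := hErecs N
    have h2 := hS (2 * G) (G ^ 2) (by positivity) (by positivity) N
    have h3 : -(n * K * ∑' t, α t * D t) ≤ ∑ t ∈ range N, α t * h t := by
      have h4 : ∑ t ∈ range N, -(n * K * (α t * D t)) ≤ ∑ t ∈ range N, α t * h t :=
        Finset.sum_le_sum fun t _ => by
          have := mul_le_mul_of_nonneg_left (hlow t) (hαpos t).le
          linarith
      rw [Finset.sum_neg_distrib, ← Finset.mul_sum] at h4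
      have h1 := hsum.sum_le_tsum (range N) (fun t _ => mul_nonneg (hαpos t).le (hD0 t))
      have := mul_le_mul_of_nonneg_left h1 (mul_nonneg hn'.le hK0)
      linarith
    have h5 := mul_le_mul_of_nonneg_left h3 (by positivity : 0 ≤ 2 * (n:ℝ)⁻¹)
    have h6 : 2 * (n:ℝ)⁻¹ * -(n * K * ∑' t, α t * D t) = -(2 * K * ∑' t, α t * D t) := by
      field_simp
    linarith
  have hhbd : ∀ N, ∑ t ∈ range N, α t * h t ≤ n * B := by
    intro N
    have h1 := hErecs N
    have h2 := hS (2 * G) (G ^ 2) (by positivity) (by positivity) N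
    have h3 : 0 ≤ E N := by simp only [hE]; positivity
    have hB0 : 0 ≤ B := by
      have h4 : 0 ≤ ∑' t, α t * D t := tsum_nonneg fun t => mul_nonneg (hαpos t).le (hD0 t)
      have h5 : 0 ≤ ∑' t, α t ^ 2 := tsum_nonneg fun t => by positivity
      have h6 : 0 ≤ E 0 := by simp only [hE]; positivity
      positivity
    have h4 : (n:ℝ)⁻¹ * ∑ t ∈ range N, α t * h t ≤ B := by
      linarith
    rwa [inv_mul_le_iff₀ hn'] at h4
  -- iterates bounded
  set R := (P + 1) + 2 * M with hR
  have hxR : ∀ t, ‖xb t - zstar‖ ≤ P + 1 := by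
    intro t
    have := hEbd t
    simp only [hE] at this
    nlinarith [norm_nonneg (xb t - zstar)]
  have hzR : ∀ t i, ‖z t i - zstar‖ ≤ R := by
    intro t i
    have := norm_add_le (z t i - xb t) (xb t - zstar)
    rw [sub_add_sub_cancel] at this
    linarith [hzx t i, hxR t, hM t]
  have hzbR : ∀ t, ‖zbar t - zstar‖ ≤ R := by
    intro t
    let i : Fin n := ⟨0, hn⟩
    have := norm_add_le (zbar t - z t i) ((z t i - xb t) + (xb t - zstar))
    rw [sub_add_sub_cancel, sub_add_sub_cancel, norm_sub_rev (zbar t) (z t i)] at this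
    have h2 := norm_add_le (z t i - xb t) (xb t - zstar)
    rw [sub_add_sub_cancel] at h2
    linarith [hzx t i, hxR t, hM t, hzz t i]
  obtain ⟨K', hK'0, hK'⟩ := lip_ball f hconv zstar R
  have hFz : ∀ t, F (zbar t) - F zstar ≤ (n:ℝ)⁻¹ * h t + K' * D t := by
    intro t
    have h1 : ∀ j, f j (zbar t) - f j zstar ≤ (f j (z t j) - f j zstar) + K' * D t := by
      intro j
      have h2 := hK' j (zbar t) (z t j) (hzbR t) (hzR t j)
      rw [norm_sub_rev] at h2
      have h3 := mul_le_mul_of_nonneg_left (hzz t j) hK'0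
      linarith
    have h2 := Finset.sum_le_sum (s := Finset.univ) fun j _ => h1 j
    rw [Finset.sum_add_distrib, Finset.sum_sub_distrib] at h2
    simp only [Finset.sum_const, Finset.card_univ, Fintype.card_fin, nsmul_eq_mul] at h2
    have h3 := mul_le_mul_of_nonneg_left h2 (inv_nonneg.2 hn'.le)
    rw [hF, hF, ← mul_sub]
    refine h3.trans (le_of_eq ?_)
    simp only [hh]
    field_simp
  set C := B + K' * ∑' t, α t * D t with hC
  have hFsum : ∀ N, ∑ t ∈ range N, α t * (F (zbar t) - F zstar) ≤ C := by
    intro N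
    have h1 : ∑ t ∈ range N, α t * (F (zbar t) - F zstar) ≤
        ∑ t ∈ range N, ((n:ℝ)⁻¹ * (α t * h t) + K' * (α t * D t)) :=
      Finset.sum_le_sum fun t _ => by
        have := mul_le_mul_of_nonneg_left (hFz t) (hαpos t).le
        linarith
    rw [Finset.sum_add_distrib, ← Finset.mul_sum, ← Finset.mul_sum] at h1
    have h2 := hsum.sum_le_tsum (range N) (fun t _ => mul_nonneg (hαpos t).le (hD0 t))
    have h3 := mul_le_mul_of_nonneg_left h2 hK'0
    have h4 : (n:ℝ)⁻¹ * ∑ t ∈ range N, α t * h t ≤ B := by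
      rw [inv_mul_le_iff₀ hn']; exact hhbd N
    linarith
  have hFconv : ConvexOn ℝ Set.univ F := by
    refine ⟨convex_univ, fun u _ v _ a b ha hb hab => ?_⟩
    rw [hF, hF, hF]
    have h1 : ∑ i, f i (a • u + b • v) ≤ ∑ i, (a * f i u + b * f i v) :=
      Finset.sum_le_sum fun i _ => by
        simpa using (hconv i).2 (Set.mem_univ u) (Set.mem_univ v) ha hb hab
    rw [Finset.sum_add_distrib, ← Finset.mul_sum, ← Finset.mul_sum] at h1
    have h3 := mul_le_mul_of_nonneg_left h1 (inv_nonneg.2 hn'.le)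
    simp only [smul_eq_mul]
    linarith
  have hA : Tendsto (fun t => ∑ τ ∈ range (t + 1), α τ) atTop atTop :=
    ((not_summable_iff_tendsto_nat_atTop_of_nonneg fun t => (hαpos t).le).1 hαdiv).comp
      (tendsto_add_atTop_nat 1)
  have hlim : Tendsto (fun t => F zstar + C / ∑ τ ∈ range (t + 1), α τ) atTop
      (nhds (F zstar)) := by
    have := (tendsto_const_nhds (x := C)).div_atTop hA
    simpa using this.const_add (F zstar)
  refine tendsto_of_tendsto_of_tendsto_of_le_of_le tendsto_const_nhds hlim
    (fun t => hmin _) (fun t => ?_)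
  have hApos : 0 < ∑ τ ∈ range (t + 1), α τ :=
    Finset.sum_pos (fun i _ => hαpos i) ⟨0, by simp⟩
  have hJ := hFconv.map_centerMass_le (t := range (t + 1)) (w := α) (p := zbar)
    (fun i _ => (hαpos i).le) hApos (fun i _ => Set.mem_univ _)
  simp only [Finset.centerMass, smul_eq_mul, Function.comp] at hJ
  refine hJ.trans ?_
  have h1 := hFsum (t + 1)
  simp only [mul_sub, Finset.sum_sub_distrib, ← Finset.sum_mul] at h1
  rw [inv_mul_le_iff₀ hApos, mul_add, mul_div_cancel₀ _ hApos.ne']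
  linarith
end

section
/- If the graph sequence {𝔾(t)} of the column stochastic matrix sequence {W(t)} is uniformly strongly connected and y(t) is defined by y(t+1) = W(t) y(t) with y(0) = 𝟙, then there exists a constant η > 0 such that η ≤ y_i(t) ≤ n for all i ∈ {1,…,n} and all t ≥ 0. -/
open Filter Finset
open scoped InnerProductSpace

theorem stmt_9
    (n : ℕ) (hn : 0 < n)
    (W : ℕ → Matrix (Fin n) (Fin n) ℝ)
    (hWnonneg : ∀ t i j, 0 ≤ W t i j)
    (hWcol : ∀ t j, ∑ i, W t i j = 1)
    (hWdiag : ∀ t i, 0 < W t i i)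
    (β : ℝ) (hβ : 0 < β)
    (hWβ : ∀ t i j, 0 < W t i j → β ≤ W t i j)
    (L : ℕ) (hL : 0 < L)
    (hUSC : ∀ t : ℕ, ∀ i j : Fin n,
      Relation.TransGen (fun u v : Fin n => ∃ k ∈ Finset.Ico t (t + L), 0 < W k v u) i j)
    (y : ℕ → Fin n → ℝ)
    (hy0 : ∀ i, y 0 i = 1)
    (hyrec : ∀ t i, y (t + 1) i = ∑ j, W t i j * y t j)
    :
    ∃ η : ℝ, 0 < η ∧ ∀ t i, η ≤ y t i ∧ y t i ≤ (n : ℝ) := by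
  have hypos : ∀ t i, 0 ≤ y t i := by
    intro t
    induction t with
    | zero => intro i; rw [hy0]; norm_num
    | succ t ih =>
      intro i
      rw [hyrec]
      exact Finset.sum_nonneg fun j _ => mul_nonneg (hWnonneg t i j) (ih j)
  have hedge : ∀ k u v, 0 < W k v u → β * y k u ≤ y (k + 1) v := by
    intro k u v h
    rw [hyrec]
    calc β * y k u ≤ W k v u * y k u := mul_le_mul_of_nonneg_right (hWβ k v u h) (hypos k u)
      _ ≤ _ := Finset.single_le_sum (f := fun j => W k v j * y k j)
        (fun j _ => mul_nonneg (hWnonneg k v j) (hypos k j)) (Finset.mem_univ u)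
  have hdecay : ∀ s t i, β ^ s * y t i ≤ y (t + s) i := by
    intro s
    induction s with
    | zero => intro t i; simp
    | succ s ih =>
      intro t i
      calc β ^ (s + 1) * y t i = β * (β ^ s * y t i) := by ring
        _ ≤ β * y (t + s) i := mul_le_mul_of_nonneg_left (ih t i) hβ.le
        _ ≤ _ := hedge (t + s) i i (hWdiag _ i)
  have hsum : ∀ t, ∑ i, y t i = n := by
    intro t
    induction t with
    | zero => simp [hy0]
    | succ t ih =>
      simp only [hyrec]
      rw [Finset.sum_comm]
      simp only [← Finset.sum_mul, hWcol, one_mul]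
      exact ih
  have hβ1 : β ≤ 1 := by
    refine (hWβ 0 ⟨0, hn⟩ ⟨0, hn⟩ (hWdiag _ _)).trans ?_
    rw [← hWcol 0 ⟨0, hn⟩]
    exact Finset.single_le_sum (f := fun i => W 0 i ⟨0, hn⟩)
      (fun j _ => hWnonneg _ _ _) (Finset.mem_univ _)
  have hgrow : ∀ (t : ℕ) (S : Finset (Fin n)) (c : ℝ), 0 ≤ c → S.Nonempty → S ≠ Finset.univ →
      (∀ i ∈ S, c ≤ y t i) →
      ∃ v, v ∉ S ∧ ∀ i ∈ insert v S, β ^ L * c ≤ y (t + L) i := by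
    intro t S c hc hS hSu hSc
    have hex : ∃ u ∈ S, ∃ v, v ∉ S ∧ ∃ k ∈ Finset.Ico t (t + L), 0 < W k v u := by
      by_contra hcon
      push Not at hcon
      obtain ⟨a, ha⟩ := hS
      apply hSu
      rw [Finset.eq_univ_iff_forall]
      intro b
      have h := hUSC t a b
      induction h with
      | single h =>
        by_contra hb
        obtain ⟨k, hk, hw⟩ := h
        exact absurd hw (not_lt.mpr (hcon a ha _ hb k hk))
      | tail _ h ih =>
        by_contra hb
        obtain ⟨k, hk, hw⟩ := h
        exact absurd hw (not_lt.mpr (hcon _ ih _ hb k hk))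
    obtain ⟨u, hu, v, hv, k, hk, hw⟩ := hex
    refine ⟨v, hv, ?_⟩
    intro i hi
    rw [Finset.mem_insert] at hi
    rcases hi with rfl | hi
    · rw [Finset.mem_Ico] at hk
      obtain ⟨a, rfl⟩ := Nat.exists_eq_add_of_le hk.1
      obtain ⟨b, hb⟩ := Nat.exists_eq_add_of_le (show a + 1 ≤ L by omega)
      subst hb
      have h1 := hdecay a t u
      have h2 := hedge _ _ _ hw
      have h3 := hdecay b (t + a + 1) i
      have e : t + (a + 1 + b) = t + a + 1 + b := by ring
      rw [e]
      calc β ^ (a + 1 + b) * c = β ^ b * (β * (β ^ a * c)) := by ring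
        _ ≤ β ^ b * (β * (β ^ a * y t u)) := by
          have := hSc u hu
          gcongr
        _ ≤ β ^ b * (β * y (t + a) u) := by gcongr
        _ ≤ β ^ b * y (t + a + 1) i := by gcongr
        _ ≤ _ := h3
    · exact (mul_le_mul_of_nonneg_left (hSc i hi) (by positivity)).trans (hdecay L t i)
  have hiter : ∀ (t m : ℕ), ∃ S : Finset (Fin n), S.Nonempty ∧ (S = Finset.univ ∨ m ≤ S.card) ∧
      ∀ i ∈ S, β ^ (m * L) ≤ y (t + m * L) i := by
    intro t m
    induction m with
    | zero =>
      have : ∃ i, 1 ≤ y t i := by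
        by_contra hcon
        push Not at hcon
        have h : ∑ i, y t i < ∑ _i : Fin n, (1 : ℝ) :=
          Finset.sum_lt_sum_of_nonempty ⟨⟨0, hn⟩, Finset.mem_univ _⟩ fun i _ => hcon i
        rw [hsum] at h
        simp at h
      obtain ⟨i, hi⟩ := this
      exact ⟨{i}, by simp, by simp, by simpa using hi⟩
    | succ m ih =>
      obtain ⟨S, hS, hc, hb⟩ := ih
      have e : t + (m + 1) * L = t + m * L + L := by ring
      have e2 : β ^ ((m + 1) * L) = β ^ L * β ^ (m * L) := by ring
      rw [e, e2]
      by_cases hSu : S = Finset.univ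
      · refine ⟨S, hS, Or.inl hSu, fun i hi => ?_⟩
        exact (mul_le_mul_of_nonneg_left (hb i hi) (by positivity)).trans (hdecay L _ i)
      · obtain ⟨v, hv, h⟩ := hgrow (t + m * L) S _ (by positivity) hS hSu hb
        refine ⟨insert v S, by simp, Or.inr ?_, h⟩
        rw [Finset.card_insert_of_notMem hv]
        have := hc.resolve_left hSu
        omega
  refine ⟨β ^ (n * L), by positivity, fun t i => ⟨?_, ?_⟩⟩
  · rcases le_total (n * L) t with h | h
    · obtain ⟨s, rfl⟩ := Nat.exists_eq_add_of_le' h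
      obtain ⟨S, hS, hc, hb⟩ := hiter s n
      have hSu : S = Finset.univ := by
        rcases hc with hc | hc
        · exact hc
        · exact Finset.eq_univ_of_card S
            (le_antisymm (Finset.card_le_univ S) (by simpa using hc))
      exact hb i (hSu ▸ Finset.mem_univ i)
    · have h1 := hdecay t 0 i
      rw [hy0, mul_one, zero_add] at h1
      exact (pow_le_pow_of_le_one hβ.le hβ1 h).trans h1
  · rw [← hsum t]
    exact Finset.single_le_sum (f := fun i => y t i) (fun j _ => hypos t j) (Finset.mem_univ i)
end
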